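/- arXiv:1503.04717 — 6 statements merged into one kernel-verified Lean document; each statement's English description precedes it below -/
import Mathlib

section
/- Let ε ∈ (0, 2/27), let q be a prime with q² ≥ 130 and q² > 1/ε, and set n = q². If Q ⊆ ℝ^{n+1} is a compact set that can be written as the intersection of m closed half-spaces and Q is an ε-approximated formulation of the knapsack polytope P(n+1,ε), then m ≥ n^{(⌊q/2⌋ − 4 + 1)/2}. In particular, any linear description of an ε-approximated formulation of P(n+1,ε) in the original space ℝ^{n+1} requires a number of inequalities super-polynomial in n. -/
noncomputable section

/-- Dot product on `ℝ^d`. -/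
def dot {d : ℕ} (c x : Fin d → ℝ) : ℝ := ∑ i, c i * x i

/-- `Q` is an `ε`-approximated formulation of `P`: `P ⊆ Q` and for every objective `c`,
`max {c·x : x ∈ P} ≥ (1-ε) · max {c·x : x ∈ Q}` (maxima expressed via `sSup`,
both sets being compact). -/
def IsApproxFormulation {d : ℕ} (ε : ℝ) (P Q : Set (Fin d → ℝ)) : Prop :=
  P ⊆ Q ∧ ∀ c : Fin d → ℝ,
    (1 - ε) * sSup ((fun x => dot c x) '' Q) ≤ sSup ((fun x => dot c x) '' P)

/-- The feasible 0/1 points of the knapsack instance defining `P(n+1, ε)` with `n = q²`: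
`x ∈ {0,1}^{n+1}` with `∑_{i=1}^n x_i/(2εq) + n·x_{n+1} ≤ n + 1/(2ε) − 1`. -/
def knapVert (q : ℕ) (ε : ℝ) : Set (Fin (q ^ 2 + 1) → ℝ) :=
  {x | (∀ i, x i = 0 ∨ x i = 1) ∧
    (∑ i : Fin (q ^ 2), x i.castSucc / (2 * ε * q)) + (q ^ 2 : ℝ) * x (Fin.last (q ^ 2))
      ≤ (q ^ 2 : ℝ) + 1 / (2 * ε) - 1}

/-- The knapsack polytope `P(n+1, ε)` with `n = q²`. -/
def knapP (q : ℕ) (ε : ℝ) : Set (Fin (q ^ 2 + 1) → ℝ) := convexHull ℝ (knapVert q ε)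

/-! A large family of points outside `Q` is exhibited, no two of which violate the same inequality.
For a set `S` of `q` small items consider the point `χ_S + (2/3) e_{n+1}`.

* It is cut off by every approximated formulation: `∑_{i ∈ S} x_i + 2εq x_{n+1} ≤ q` is valid for
  the polytope, and the point violates it by more than the approximation factor allows.
* If `|S ∩ T|` is small, then the midpoint of the points of `S` and `T` lies in the polytope: it is
  the convex combination of `χ_{S ∪ T}` (weight `1/3`) with four points `χ_R + e_{n+1}`, where
  `S ∩ T ⊆ R` and `R` contains about half of `S \ T` or of `T \ S` (weight `1/6` each). So no valid
  inequality is violated by both points.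

Hence there are at least as many inequalities as sets in any family with small pairwise
intersections. The graphs of the polynomials of degree `< k` over a field with `q` elements form
such a family of size `q ^ k` (the Nisan–Wigderson design).
-/

open Finset Polynomial

section Design

variable {K : Type*} [Field K] [Fintype K] [DecidableEq K]

/-- The graph of a polynomial function on a finite field, as a finite set of pairs. -/
def evalGraph (p : K[X]) : Finset (K × K) := univ.image fun x => (x, p.eval x)

lemma mem_evalGraph {p : K[X]} {z : K × K} : z ∈ evalGraph p ↔ p.eval z.1 = z.2 := by
  simp [evalGraph, Prod.ext_iff]

lemma card_evalGraph (p : K[X]) : #(evalGraph p) = Fintype.card K :=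
  card_image_of_injective _ fun _ _ h => congrArg Prod.fst h

lemma card_evalGraph_inter_lt {k : ℕ} {p r : K[X]} (hp : p ∈ degreeLT K k)
    (hr : r ∈ degreeLT K k) (hpr : p ≠ r) : #(evalGraph p ∩ evalGraph r) < k := by
  set agree : Finset K := (evalGraph p ∩ evalGraph r).image Prod.fst
  have hcard : #agree = #(evalGraph p ∩ evalGraph r) := by
    refine card_image_of_injOn fun y hy z hz hyz => Prod.ext hyz ?_
    have hy' := mem_evalGraph.1 (mem_inter.1 (mem_coe.1 hy)).1
    have hz' := mem_evalGraph.1 (mem_inter.1 (mem_coe.1 hz)).1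
    rw [← hy', ← hz', hyz]
  by_contra! hk
  have hk' : (k : WithBot ℕ) ≤ #agree := by exact_mod_cast hcard ▸ hk
  refine hpr (eq_of_degrees_lt_of_eval_finset_eq agree ((mem_degreeLT.1 hp).trans_le hk')
    ((mem_degreeLT.1 hr).trans_le hk') fun x hx => ?_)
  obtain ⟨z, hz, rfl⟩ := mem_image.1 hx
  rw [mem_inter, mem_evalGraph, mem_evalGraph] at hz
  rw [hz.1, hz.2]

end Design

lemma exists_finset_family_card_inter_lt {q : ℕ} (hq : IsPrimePow q) (k : ℕ) :
    ∃ F : Fin (q ^ k) → Finset (Fin (q ^ 2)),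
      (∀ u, #(F u) = q) ∧ Pairwise fun u v => #(F u ∩ F v) < k := by
  classical
  obtain ⟨K, _, _, hK⟩ : ∃ (K : Type) (_ : Field K) (_ : Fintype K), Fintype.card K = q := by
    obtain ⟨inst⟩ := (Fintype.nonempty_field_iff (α := Fin q)).2 (by simpa using hq)
    exact ⟨Fin q, inst, inferInstance, Fintype.card_fin q⟩
  let pairEquiv : K × K ≃ Fin (q ^ 2) := Fintype.equivFinOfCardEq (by simp [hK, sq])
  let coeffEquiv : Fin (q ^ k) ≃ (Fin k → K) := (Fintype.equivFinOfCardEq (by simp [hK])).symm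
  let poly : Fin (q ^ k) ≃ degreeLT K k := coeffEquiv.trans (degreeLTEquiv K k).symm.toEquiv
  refine ⟨fun u => (evalGraph (poly u : K[X])).map pairEquiv.toEmbedding, fun u => ?_,
    fun u v huv => ?_⟩
  · rw [card_map, card_evalGraph, hK]
  · beta_reduce
    rw [← map_inter, card_map]
    exact card_evalGraph_inter_lt (poly u).2 (poly v).2
      fun h => huv (poly.injective (Subtype.ext h))

lemma isLinearMap_dot {d : ℕ} (c : Fin d → ℝ) : IsLinearMap ℝ (dot c) :=
  ⟨dotProduct_add c, fun r x => dotProduct_smul r c x⟩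

lemma card_le_of_segment_inter_nonempty {d : ℕ} {ι κ : Type*} [Fintype ι] [Fintype κ]
    (a : ι → Fin d → ℝ) (b : ι → ℝ) (p : κ → Fin d → ℝ)
    (hout : ∀ u, p u ∉ ⋂ i, {x | dot (a i) x ≤ b i})
    (hseg : Pairwise fun u v => (segment ℝ (p u) (p v) ∩ ⋂ i, {x | dot (a i) x ≤ b i}).Nonempty) :
    Fintype.card κ ≤ Fintype.card ι := by
  have hviolated : ∀ u, ∃ i, b i < dot (a i) (p u) := by simpa using hout
  choose f hf using hviolated
  refine Fintype.card_le_of_injective f fun u v huv => ?_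
  by_contra hne
  obtain ⟨z, hz, hzQ⟩ := hseg hne
  have hviol : b (f u) < dot (a (f u)) z :=
    (convex_halfSpace_gt (isLinearMap_dot (a (f u))) (b (f u))).segment_subset
      (hf u) (huv ▸ hf v) hz
  exact hviol.not_ge (Set.mem_iInter.1 hzQ (f u))

lemma IsApproxFormulation.mul_dot_le {d : ℕ} {ε β : ℝ} {P Q : Set (Fin d → ℝ)}
    (h : IsApproxFormulation ε P Q) (hQ : IsCompact Q) (hε : ε ≤ 1) (hP : P.Nonempty)
    {c x : Fin d → ℝ} (hx : x ∈ Q) (hβ : ∀ y ∈ P, dot c y ≤ β) : (1 - ε) * dot c x ≤ β := by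
  have hcont : Continuous (dot c) := (isLinearMap_dot c).mk'.continuous_of_finiteDimensional
  calc (1 - ε) * dot c x
      ≤ (1 - ε) * sSup (dot c '' Q) :=
        mul_le_mul_of_nonneg_left
          (le_csSup (hQ.image hcont).bddAbove (Set.mem_image_of_mem _ hx)) (sub_nonneg.2 hε)
    _ ≤ sSup (dot c '' P) := h.2 c
    _ ≤ β := csSup_le (hP.image _) (Set.forall_mem_image.2 hβ)

/-- The point `χ_S + t e_{n+1}` of `ℝ^{n+1}`. -/
def indicatorSnoc {n : ℕ} (S : Finset (Fin n)) (t : ℝ) : Fin (n + 1) → ℝ :=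
  Fin.snoc (α := fun _ => ℝ) ((S : Set (Fin n)).indicator 1) t

section IndicatorSnoc

variable {n : ℕ}

lemma indicatorSnoc_castSucc (S : Finset (Fin n)) (t : ℝ) (i : Fin n) :
    indicatorSnoc S t i.castSucc = if i ∈ S then 1 else 0 := by
  simp [indicatorSnoc, Set.indicator_apply]

lemma indicatorSnoc_last (S : Finset (Fin n)) (t : ℝ) :
    indicatorSnoc S t (Fin.last n) = t := by
  simp [indicatorSnoc]

lemma dot_indicatorSnoc (S : Finset (Fin n)) (t : ℝ) (x : Fin (n + 1) → ℝ) :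
    dot (indicatorSnoc S t) x = ∑ i ∈ S, x i.castSucc + t * x (Fin.last n) := by
  simp [dot, Fin.sum_univ_castSucc, indicatorSnoc_castSucc, indicatorSnoc_last]

lemma midpoint_indicatorSnoc_mem_of_subset {I S : Finset (Fin n)} (hIS : I ⊆ S) {r : ℕ}
    (hr : #I + #S ≤ 2 * r) {t : ℝ} {P : Set (Fin (n + 1) → ℝ)} (hP : Convex ℝ P)
    (h : ∀ R, #R ≤ r → indicatorSnoc R t ∈ P) :
    midpoint ℝ (indicatorSnoc I t) (indicatorSnoc S t) ∈ P := by
  have hcard : #I ≤ #S := card_le_card hIS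
  obtain ⟨B, hIB, hBS, hB⟩ := exists_subsuperset_card_eq hIS
    (n := (#I + #S) / 2) (by omega) (by omega)
  have hC : #(I ∪ S \ B) ≤ r := by
    have := card_union_le I (S \ B)
    rw [card_sdiff_of_subset hBS] at this
    omega
  have heq : midpoint ℝ (indicatorSnoc I t) (indicatorSnoc S t) =
      midpoint ℝ (indicatorSnoc B t) (indicatorSnoc (I ∪ S \ B) t) := by
    simp only [midpoint_eq_smul_add]
    congr 1
    ext i
    refine Fin.lastCases ?_ (fun i => ?_) i
    · simp only [Pi.add_apply, indicatorSnoc_last]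
    · simp only [Pi.add_apply, indicatorSnoc_castSucc, mem_union, mem_sdiff]
      have := @hIB i
      have := @hBS i
      by_cases i ∈ I <;> by_cases i ∈ B <;> by_cases i ∈ S <;> simp_all
  rw [heq]
  exact hP.midpoint_mem (h B (by omega)) (h _ hC)

lemma midpoint_indicatorSnoc_two_thirds_mem {S T : Finset (Fin n)} {P : Set (Fin (n + 1) → ℝ)}
    (hP : Convex ℝ P) (hST : indicatorSnoc (S ∪ T) 0 ∈ P)
    (hS : midpoint ℝ (indicatorSnoc (S ∩ T) 1) (indicatorSnoc S 1) ∈ P)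
    (hT : midpoint ℝ (indicatorSnoc (S ∩ T) 1) (indicatorSnoc T 1) ∈ P) :
    midpoint ℝ (indicatorSnoc S (2 / 3)) (indicatorSnoc T (2 / 3)) ∈ P := by
  convert hP hST (hP.midpoint_mem hS hT)
    (by norm_num : (0 : ℝ) ≤ 1 / 3) (by norm_num : (0 : ℝ) ≤ 2 / 3) (by norm_num) using 1
  simp only [midpoint_eq_smul_add]
  ext i
  refine Fin.lastCases ?_ (fun i => ?_) i
  · simp only [Pi.add_apply, Pi.smul_apply, smul_eq_mul, indicatorSnoc_last]
    norm_num
  · simp only [Pi.add_apply, Pi.smul_apply, smul_eq_mul, indicatorSnoc_castSucc, mem_union,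
      mem_inter]
    by_cases i ∈ S <;> by_cases i ∈ T <;> simp_all <;> norm_num

end IndicatorSnoc

section Knapsack

variable {q : ℕ} {ε : ℝ}

lemma indicatorSnoc_mem_knapVert_iff {R : Finset (Fin (q ^ 2))} {t : ℝ} :
    indicatorSnoc R t ∈ knapVert q ε ↔ (t = 0 ∨ t = 1) ∧
      #R / (2 * ε * q) + (q : ℝ) ^ 2 * t ≤ (q : ℝ) ^ 2 + 1 / (2 * ε) - 1 := by
  simp only [knapVert, Set.mem_ofPred_eq, Fin.forall_fin_succ', indicatorSnoc_castSucc,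
    indicatorSnoc_last, ← sum_div]
  simp [em']

lemma indicatorSnoc_zero_mem_knapVert (hε : 0 < ε) (hqε : 1 / (2 * ε) + 1 ≤ (q : ℝ) ^ 2)
    {R : Finset (Fin (q ^ 2))} (hR : #R ≤ 2 * q) : indicatorSnoc R 0 ∈ knapVert q ε := by
  refine indicatorSnoc_mem_knapVert_iff.2 ⟨Or.inl rfl, ?_⟩
  have hweight : #R / (2 * ε * q) ≤ 1 / ε := by
    refine div_le_of_le_mul₀ (by positivity) (by positivity) ?_
    calc (#R : ℝ) ≤ 2 * q := by exact_mod_cast hR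
      _ = 1 / ε * (2 * ε * q) := by field_simp
  have hhalves : 1 / ε = 1 / (2 * ε) + 1 / (2 * ε) := by field_simp; norm_num
  linarith

lemma div_le_half_inv_sub_one_iff (hq : 0 < q) (hε : 0 < ε) {w : ℝ} :
    w / (2 * ε * q) ≤ 1 / (2 * ε) - 1 ↔ w ≤ (1 - 2 * ε) * q := by
  have hscale : 0 < 2 * ε * q := mul_pos (mul_pos two_pos hε) (Nat.cast_pos.2 hq)
  rw [div_le_iff₀ hscale]
  field_simp

lemma indicatorSnoc_one_mem_knapVert (hq : 0 < q) (hε : 0 < ε) {R : Finset (Fin (q ^ 2))}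
    (hR : #R ≤ (1 - 2 * ε) * q) : indicatorSnoc R 1 ∈ knapVert q ε := by
  refine indicatorSnoc_mem_knapVert_iff.2 ⟨Or.inr rfl, ?_⟩
  linarith [(div_le_half_inv_sub_one_iff hq hε).2 hR]

lemma knapP_nonempty (hq : 0 < q) (hε : 0 < ε) : (knapP q ε).Nonempty := by
  refine ⟨indicatorSnoc ∅ 0, subset_convexHull ℝ _ (indicatorSnoc_mem_knapVert_iff.2 ?_)⟩
  have hq' : (1 : ℝ) ≤ (q : ℝ) ^ 2 := one_le_pow₀ (by exact_mod_cast hq)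
  have hε' : 0 < 1 / (2 * ε) := by positivity
  simp only [true_or, card_empty, Nat.cast_zero, zero_div, mul_zero, true_and]
  linarith

lemma dot_indicatorSnoc_le_of_mem_knapVert (hq : 0 < q) (hε : 0 < ε) {S : Finset (Fin (q ^ 2))}
    (hS : #S ≤ q) {x : Fin (q ^ 2 + 1) → ℝ} (hx : x ∈ knapVert q ε) :
    dot (indicatorSnoc S (2 * ε * q)) x ≤ q := by
  obtain ⟨hx01, hweight⟩ := hx
  have hnonneg : ∀ i, 0 ≤ x i := fun i => by rcases hx01 i with h | h <;> simp [h]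
  have hle_one : ∀ i, x i ≤ 1 := fun i => by rcases hx01 i with h | h <;> simp [h]
  rw [dot_indicatorSnoc]
  rcases hx01 (Fin.last _) with hlast | hlast
  · calc ∑ i ∈ S, x i.castSucc + 2 * ε * q * x (Fin.last _)
        = ∑ i ∈ S, x i.castSucc := by rw [hlast, mul_zero, add_zero]
      _ ≤ #S := by simpa using sum_le_card_nsmul S _ 1 fun i _ => hle_one i.castSucc
      _ ≤ q := by exact_mod_cast hS
  · rw [hlast, mul_one, ← sum_div] at hweight
    have hsum : ∑ i : Fin (q ^ 2), x i.castSucc ≤ (1 - 2 * ε) * q :=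
      (div_le_half_inv_sub_one_iff hq hε).1 (by linarith)
    have hsub : ∑ i ∈ S, x i.castSucc ≤ ∑ i : Fin (q ^ 2), x i.castSucc :=
      sum_le_univ_sum_of_nonneg fun i => hnonneg i.castSucc
    rw [hlast]
    linarith

lemma dot_indicatorSnoc_le_of_mem_knapP (hq : 0 < q) (hε : 0 < ε) {S : Finset (Fin (q ^ 2))}
    (hS : #S ≤ q) {x : Fin (q ^ 2 + 1) → ℝ} (hx : x ∈ knapP q ε) :
    dot (indicatorSnoc S (2 * ε * q)) x ≤ q :=
  convexHull_min (fun _ => dot_indicatorSnoc_le_of_mem_knapVert hq hε hS)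
    (convex_halfSpace_le (isLinearMap_dot _) _) hx

lemma IsApproxFormulation.indicatorSnoc_notMem {Q : Set (Fin (q ^ 2 + 1) → ℝ)}
    (happ : IsApproxFormulation ε (knapP q ε) Q) (hQ : IsCompact Q) (hq : 0 < q) (hε0 : 0 < ε)
    (hε1 : ε ≤ 1) {t : ℝ} (ht : 1 < 2 * (1 - ε) * t) {S : Finset (Fin (q ^ 2))} (hS : #S = q) :
    indicatorSnoc S t ∉ Q := by
  intro hmem
  have hq' : (0 : ℝ) < q := by exact_mod_cast hq
  have hvalue : dot (indicatorSnoc S (2 * ε * q)) (indicatorSnoc S t) = q + 2 * ε * q * t := by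
    simp [dot_indicatorSnoc, indicatorSnoc_castSucc, indicatorSnoc_last, hS]
  have hle : (1 - ε) * (q + 2 * ε * q * t) ≤ q := hvalue ▸
    happ.mul_dot_le hQ hε1 (knapP_nonempty hq hε0) hmem
      fun _ => dot_indicatorSnoc_le_of_mem_knapP hq hε0 hS.le
  have hgap : 0 < ε * q * (2 * (1 - ε) * t - 1) :=
    mul_pos (mul_pos hε0 hq') (sub_pos.2 ht)
  linarith

lemma midpoint_indicatorSnoc_mem_knapP (hq : 0 < q) (hε : 0 < ε)
    (hqε : 1 / (2 * ε) + 1 ≤ (q : ℝ) ^ 2) {S T : Finset (Fin (q ^ 2))} (hS : #S = q)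
    (hT : #T = q) (hST : #(S ∩ T) + 1 ≤ (1 - 4 * ε) * q) :
    midpoint ℝ (indicatorSnoc S (2 / 3)) (indicatorSnoc T (2 / 3)) ∈ knapP q ε := by
  have hone (R : Finset (Fin (q ^ 2))) (hR : #R ≤ (#(S ∩ T) + q + 1) / 2) :
      indicatorSnoc R 1 ∈ knapP q ε := by
    refine subset_convexHull ℝ _ (indicatorSnoc_one_mem_knapVert hq hε ?_)
    have hR' : 2 * (#R : ℝ) ≤ #(S ∩ T) + q + 1 := by
      exact_mod_cast (by omega : 2 * #R ≤ #(S ∩ T) + q + 1)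
    linarith
  have hconv : Convex ℝ (knapP q ε) := convex_convexHull ℝ _
  refine midpoint_indicatorSnoc_two_thirds_mem hconv ?_
    (midpoint_indicatorSnoc_mem_of_subset inter_subset_left (by omega) hconv hone)
    (midpoint_indicatorSnoc_mem_of_subset inter_subset_right (by omega) hconv hone)
  have hunion : #(S ∪ T) ≤ 2 * q := (card_union_le S T).trans (by omega)
  exact subset_convexHull ℝ _ (indicatorSnoc_zero_mem_knapVert hε hqε hunion)

end Knapsack

theorem knapsack_no_compact_approx_original_space_general {ε : ℝ} (hε0 : 0 < ε) (hε1 : ε < 1 / 4)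
    {q k : ℕ} (hq : IsPrimePow q) (hqε : 1 / (2 * ε) + 1 ≤ (q : ℝ) ^ 2)
    (hk : k ≤ (1 - 4 * ε) * q) {ι : Type*} [Fintype ι] (a : ι → Fin (q ^ 2 + 1) → ℝ) (b : ι → ℝ)
    {Q : Set (Fin (q ^ 2 + 1) → ℝ)} (hQc : IsCompact Q)
    (hQ : Q = ⋂ i, {x | dot (a i) x ≤ b i}) (happ : IsApproxFormulation ε (knapP q ε) Q) :
    q ^ k ≤ Fintype.card ι := by
  obtain ⟨F, hFcard, hFinter⟩ := exists_finset_family_card_inter_lt hq k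
  have hout (u) : indicatorSnoc (F u) (2 / 3) ∉ Q :=
    happ.indicatorSnoc_notMem hQc hq.pos hε0 (by linarith) (by linarith) (hFcard u)
  have hmid : Pairwise fun u v =>
      midpoint ℝ (indicatorSnoc (F u) (2 / 3)) (indicatorSnoc (F v) (2 / 3)) ∈ Q := by
    intro u v huv
    have hinter : (#(F u ∩ F v) : ℝ) + 1 ≤ k := by exact_mod_cast hFinter huv
    exact happ.1 (midpoint_indicatorSnoc_mem_knapP hq.pos hε0 hqε (hFcard u) (hFcard v)
      (hinter.trans hk))
  subst hQ
  simpa using card_le_of_segment_inter_nonempty a b _ hout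
    fun u v huv => ⟨_, midpoint_mem_segment _ _, hmid huv⟩

/-- for `ε ∈ (0, 2/27)`, `q` prime with `q² ≥ 130` and `q² > 1/ε`, `n = q²`,
any compact `Q ⊆ ℝ^{n+1}` that is the intersection of `m` closed half-spaces and an
`ε`-approximated formulation of the knapsack polytope `P(n+1,ε)` satisfies
`m ≥ n^{(⌊q/2⌋ − 4 + 1)/2}` (a quantity super-polynomial in `n`). -/
theorem knapsack_no_compact_approx_original_space (ε : ℝ) (hε0 : 0 < ε) (hε1 : ε < 2 / 27)
    (q : ℕ) (hq : Nat.Prime q) (hq130 : 130 ≤ q ^ 2) (hqε : 1 / ε < ((q : ℝ) ^ 2))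
    (m : ℕ) (a : Fin m → Fin (q ^ 2 + 1) → ℝ) (b : Fin m → ℝ)
    (Q : Set (Fin (q ^ 2 + 1) → ℝ)) (hQc : IsCompact Q)
    (hQ : Q = ⋂ i, {x : Fin (q ^ 2 + 1) → ℝ | dot (a i) x ≤ b i})
    (happ : IsApproxFormulation ε (knapP q ε) Q) :
    ((q : ℝ) ^ 2) ^ (((q / 2 - 4 + 1 : ℕ) : ℝ) / 2) ≤ (m : ℝ) := by
  have hk : ((q / 2 - 4 + 1 : ℕ) : ℝ) ≤ (1 - 4 * ε) * q := by
    have hq2 := hq.two_le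
    have hhalf : 2 * ((q / 2 - 4 + 1 : ℕ) : ℝ) ≤ q := by
      exact_mod_cast (by omega : 2 * (q / 2 - 4 + 1) ≤ q)
    calc ((q / 2 - 4 + 1 : ℕ) : ℝ) ≤ 1 / 2 * q := by linarith
      _ ≤ (1 - 4 * ε) * q := by gcongr; linarith
  have hqε' : 1 / (2 * ε) + 1 ≤ (q : ℝ) ^ 2 := by
    have hone : 1 ≤ 1 / (2 * ε) := (one_le_div (by positivity)).2 (by linarith)
    have hhalves : 1 / ε = 1 / (2 * ε) + 1 / (2 * ε) := by field_simp; norm_num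
    linarith
  have hcard := knapsack_no_compact_approx_original_space_general hε0 (by linarith) hq.isPrimePow
    hqε' hk a b hQc hQ happ
  rw [Real.rpow_div_two_eq_sqrt _ (by positivity), Real.sqrt_sq (by positivity),
    Real.rpow_natCast]
  exact_mod_cast hcard.trans_eq (Fintype.card_fin m)
end
end

section
/- Let P ⊆ ℝ^d be a convex set, let Q = ∩_{i=1}^m {x ∈ ℝ^d : a_i·x ≤ b_i} be a finite intersection of m closed half-spaces with P ⊆ Q, and let X ⊆ ℝ^d be a finite set such that X ∩ Q = ∅ and for every pair of distinct points x̄₁, x̄₂ ∈ X the midpoint (x̄₁ + x̄₂)/2 belongs to P. Then m ≥ |X|. (No single valid inequality can separate two points of X from Q, since the segment between them meets P.) -/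
noncomputable section

theorem halfspace_count_lower_bound_general {𝕜 E ι : Type*} [Semiring 𝕜] [PartialOrder 𝕜]
    [AddCommMonoid E] [SMul 𝕜 E] {C : ι → Set E} (hC : ∀ i, Convex 𝕜 (C i)ᶜ)
    {X : Set E} (hX : ∀ x ∈ X, x ∉ ⋂ i, C i)
    (hmeet : X.Pairwise fun x y ↦ (segment 𝕜 x y ∩ ⋂ i, C i).Nonempty) :
    Nonempty (X ↪ ι) := by
  have hviolated : ∀ x : X, ∃ i, x.1 ∉ C i := fun x ↦ by
    simpa only [Set.mem_iInter, not_forall] using hX x.1 x.2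
  choose f hf using hviolated
  -- If `x ≠ y` violated the same constraint, convexity would keep their whole segment outside it.
  refine ⟨f, fun x y hxy ↦ ?_⟩
  by_contra hne
  obtain ⟨z, hz, hzC⟩ := hmeet x.2 y.2 (Subtype.coe_ne_coe.mpr hne)
  have hz_notMem : z ∉ C (f x) := (hC (f x)).segment_subset (hf x) (hxy ▸ hf y) hz
  exact hz_notMem (Set.mem_iInter.mp hzC (f x))

section Dot

variable {d : ℕ} (c : Fin d → ℝ)

theorem isLinearMap_dot_s4 : IsLinearMap ℝ (dot c) where
  map_add := dotProduct_add c
  map_smul r x := dotProduct_smul r c x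

theorem convex_compl_setOf_dot_le (r : ℝ) : Convex ℝ {x | dot c x ≤ r}ᶜ := by
  simpa only [Set.compl_ofPred, not_le] using convex_halfSpace_gt (isLinearMap_dot_s4 c) r

end Dot

theorem half_smul_add_half_smul_mem_segment {𝕜 E : Type*} [Semifield 𝕜] [LinearOrder 𝕜]
    [IsStrictOrderedRing 𝕜] [AddCommMonoid E] [SMul 𝕜 E] (x y : E) :
    (1 / 2 : 𝕜) • x + (1 / 2 : 𝕜) • y ∈ segment 𝕜 x y :=
  ⟨1 / 2, 1 / 2, by positivity, by positivity, add_halves 1, rfl⟩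

/-- if `P` is convex, `Q = ∩_{i=1}^m {x : a_i·x ≤ b_i}` contains `P`,
and `X` is a finite set of points disjoint from `Q` such that the midpoint of any two
distinct points of `X` lies in `P`, then `m ≥ |X|`. -/
theorem halfspace_count_lower_bound {d : ℕ} (P : Set (Fin d → ℝ)) (hPconv : Convex ℝ P)
    (m : ℕ) (a : Fin m → Fin d → ℝ) (b : Fin m → ℝ) (Q : Set (Fin d → ℝ))
    (hQ : Q = ⋂ i, {x : Fin d → ℝ | dot (a i) x ≤ b i})
    (hPQ : P ⊆ Q)
    (X : Finset (Fin d → ℝ)) (hXQ : ∀ x ∈ X, x ∉ Q)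
    (hmid : ∀ x₁ ∈ X, ∀ x₂ ∈ X, x₁ ≠ x₂ → (1/2 : ℝ) • x₁ + (1/2 : ℝ) • x₂ ∈ P) :
    X.card ≤ m := by
  subst hQ
  obtain ⟨e⟩ := halfspace_count_lower_bound_general (X := (X : Set (Fin d → ℝ)))
    (fun i ↦ convex_compl_setOf_dot_le (a i) (b i)) hXQ fun x hx y hy hxy ↦
      ⟨_, half_smul_add_half_smul_mem_segment x y, hPQ (hmid x hx y hy hxy)⟩
  simpa using Fintype.card_le_of_embedding e
end
end

section
/- Let q be a prime power and let k be a natural number with k < q. Then there exists a family 𝒮 of subsets of 𝔽_q × 𝔽_q (where 𝔽_q is the field with q elements) such that: (a) |S| = q for every S ∈ 𝒮; (b) |S ∩ S'| ≤ k for every pair of distinct S, S' ∈ 𝒮; and (c) |𝒮| = q^{k+1}. Such a family is given by the graphs S_π = {(a, π(a)) : a ∈ 𝔽_q} of the polynomials π over 𝔽_q of degree at most k. -/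
noncomputable section

/-!
Two distinct polynomials of degree at most `k` over a domain agree in at most `k` points, since
their difference has at most `k` roots, so their graphs share at most `k` points. Over more than
`k` points, distinct polynomials therefore have distinct graphs, and there are as many graphs as
there are choices of the `k + 1` coefficients.
-/

open Finset Polynomial

section Graph

variable {α β : Type*} [DecidableEq α] [DecidableEq β]

/-- The graph over a finite set `s` of a function `f`, as a finite set of pairs: the finitary
counterpart of `Set.graphOn`. -/
def finsetGraphOn (f : α → β) (s : Finset α) : Finset (α × β) :=
  s.image fun a => (a, f a)

theorem card_finsetGraphOn (f : α → β) (s : Finset α) : #(finsetGraphOn f s) = #s :=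
  card_image_of_injective s fun _ _ h => congrArg Prod.fst h

theorem finsetGraphOn_inter_finsetGraphOn (f g : α → β) (s : Finset α) :
    finsetGraphOn f s ∩ finsetGraphOn g s = finsetGraphOn f {a ∈ s | f a = g a} := by
  ext ⟨a, b⟩
  simp only [finsetGraphOn, mem_inter, mem_image, mem_filter, Prod.mk.injEq]
  aesop

end Graph

section CoeffsIn

variable {R : Type*} [Semiring R] [DecidableEq R]

/-- The polynomials of degree less than `n` whose first `n` coefficients lie in `T`, as a finite
set: the coefficient vectors `Fin n → T`, read as polynomials. -/
def polynomialsWithCoeffsIn (T : Finset R) (n : ℕ) : Finset R[X] :=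
  (Fintype.piFinset fun _ : Fin n => T).map ⟨ofFn n, injective_ofFn n⟩

theorem card_polynomialsWithCoeffsIn (T : Finset R) (n : ℕ) :
    #(polynomialsWithCoeffsIn T n) = #T ^ n := by
  rw [polynomialsWithCoeffsIn, card_map, Fintype.card_piFinset_const]

theorem mem_polynomialsWithCoeffsIn_succ {T : Finset R} {k : ℕ} {p : R[X]} :
    p ∈ polynomialsWithCoeffsIn T (k + 1) ↔ p.natDegree ≤ k ∧ ∀ i ≤ k, p.coeff i ∈ T := by
  simp only [polynomialsWithCoeffsIn, mem_map, Fintype.mem_piFinset, Function.Embedding.coeFn_mk,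
    ← Nat.lt_succ_iff]
  constructor
  · rintro ⟨c, hc, rfl⟩
    refine ⟨ofFn_natDegree_lt k.succ_pos c, fun i hi => ?_⟩
    rw [ofFn_coeff_eq_val_of_lt c hi]
    exact hc ⟨i, hi⟩
  · rintro ⟨hdeg, hcoeff⟩
    exact ⟨toFn (k + 1) p, fun i => hcoeff i i.isLt, ofFn_comp_toFn_eq_id_of_natDegree_lt hdeg⟩

end CoeffsIn

section PolynomialGraph

variable {R : Type*} [CommRing R] [IsDomain R] [DecidableEq R] {k : ℕ}

theorem card_filter_eval_eq_le_natDegree_sub {p r : R[X]} (h : p ≠ r) (s : Finset R) :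
    #{a ∈ s | p.eval a = r.eval a} ≤ (p - r).natDegree := by
  contrapose! h
  exact eq_of_degree_sub_lt_of_eval_finset_eq _ (degree_le_natDegree.trans_lt (mod_cast h))
    fun _ ha => (mem_filter.mp ha).2

theorem card_finsetGraphOn_eval_inter_le {p r : R[X]} (hp : p.natDegree ≤ k)
    (hr : r.natDegree ≤ k) (h : p ≠ r) (s : Finset R) :
    #(finsetGraphOn (p.eval ·) s ∩ finsetGraphOn (r.eval ·) s) ≤ k :=
  calc #(finsetGraphOn (p.eval ·) s ∩ finsetGraphOn (r.eval ·) s)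
      = #{a ∈ s | p.eval a = r.eval a} := by
        rw [finsetGraphOn_inter_finsetGraphOn, card_finsetGraphOn]
    _ ≤ (p - r).natDegree := card_filter_eval_eq_le_natDegree_sub h s
    _ ≤ k := (natDegree_sub_le_of_le hp hr).trans_eq (max_self k)

theorem injOn_finsetGraphOn_eval {s : Finset R} (hk : k < #s) :
    Set.InjOn (fun p : R[X] => finsetGraphOn (p.eval ·) s) {p | p.natDegree ≤ k} := by
  intro p hp r hr (heq : finsetGraphOn (p.eval ·) s = finsetGraphOn (r.eval ·) s)
  by_contra hne
  have hinter := card_finsetGraphOn_eval_inter_le hp hr hne s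
  rw [← heq, inter_self, card_finsetGraphOn] at hinter
  exact hk.not_ge hinter

theorem polynomial_graphs_set_system_general {s : Finset R} (hk : k < #s) (T : Finset R) :
    ∃ 𝒮 : Finset (Finset (R × R)),
      (∀ S ∈ 𝒮, ∃ π : R[X], π.natDegree ≤ k ∧ (∀ i ≤ k, π.coeff i ∈ T) ∧
        S = s.image fun a => (a, π.eval a)) ∧
      (∀ S ∈ 𝒮, #S = #s) ∧
      (∀ S ∈ 𝒮, ∀ S' ∈ 𝒮, S ≠ S' → #(S ∩ S') ≤ k) ∧
      #𝒮 = #T ^ (k + 1) := by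
  have hdeg : ∀ p ∈ polynomialsWithCoeffsIn T (k + 1), p.natDegree ≤ k := fun p hp =>
    (mem_polynomialsWithCoeffsIn_succ.mp hp).1
  refine ⟨(polynomialsWithCoeffsIn T (k + 1)).image fun p => finsetGraphOn (p.eval ·) s,
    ?_, ?_, ?_, ?_⟩
  · refine forall_mem_image.mpr fun p hp => ?_
    obtain ⟨hpk, hpT⟩ := mem_polynomialsWithCoeffsIn_succ.mp hp
    exact ⟨p, hpk, hpT, rfl⟩
  · exact forall_mem_image.mpr fun p _ => card_finsetGraphOn (p.eval ·) s
  · refine forall_mem_image.mpr fun p hp => forall_mem_image.mpr fun r hr hne => ?_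
    exact card_finsetGraphOn_eval_inter_le (hdeg p hp) (hdeg r hr) (fun h => hne (by rw [h])) s
  · rw [card_image_of_injOn ((injOn_finsetGraphOn_eval hk).mono hdeg),
      card_polynomialsWithCoeffsIn]

end PolynomialGraph

/-- let `q` be a prime power and `k < q`. Over the field `F` with `q` elements,
there is a family `𝒮` of subsets of `F × F`, consisting of graphs of polynomials of degree
at most `k`, such that (a) each member has cardinality `q`, (b) any two distinct members
intersect in at most `k` elements, and (c) `|𝒮| = q^{k+1}`. -/
theorem polynomial_graphs_set_system (q k : ℕ) (hq : IsPrimePow q) (hk : k < q)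
    (F : Type) [Field F] [Fintype F] [DecidableEq F] (hF : Fintype.card F = q) :
    ∃ 𝒮 : Finset (Finset (F × F)),
      (∀ S ∈ 𝒮, ∃ π : Polynomial F, π.natDegree ≤ k ∧
        S = Finset.image (fun a => (a, π.eval a)) Finset.univ) ∧
      (∀ S ∈ 𝒮, S.card = q) ∧
      (∀ S ∈ 𝒮, ∀ S' ∈ 𝒮, S ≠ S' → (S ∩ S').card ≤ k) ∧
      𝒮.card = q ^ (k + 1) := by
  subst hF
  obtain ⟨𝒮, hgraph, hcard, hinter, hsize⟩ :=
    polynomial_graphs_set_system_general (s := (univ : Finset F)) hk univ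
  exact ⟨𝒮, fun S hS => (hgraph S hS).imp fun _ ⟨hdeg, _, heq⟩ => ⟨hdeg, heq⟩, hcard, hinter, hsize⟩
end
end

section
/- Let 0 < ε ≤ 1/2, let q ≥ 1 be an integer, set n = q², and let S ⊆ {1,…,n} with |S| = q. Define c ∈ ℝ^{n+1} by c_{n+1} = 1, c_i = 1/(2εq) for i ∈ S, and c_i = 0 for i ∉ S with i ≤ n. Then max{c·x : x ∈ {0,1}^{n+1}, Σ_{i=1}^n x_i/(2εq) + n·x_{n+1} ≤ n + 1/(2ε) − 1} = 1/(2ε). -/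
noncomputable section

/-- The objective `c ∈ ℝ^{n+1}` (with `n = q²`) given by `c_{n+1} = 1`,
`c_i = 1/(2εq)` for `i ∈ S`, and `c_i = 0` for the remaining `i ≤ n`. -/
def cvec (q : ℕ) (ε : ℝ) (S : Finset (Fin (q ^ 2))) : Fin (q ^ 2 + 1) → ℝ :=
  fun j => if h : (j : ℕ) < q ^ 2 then
    (if (⟨j, h⟩ : Fin (q ^ 2)) ∈ S then 1 / (2 * ε * q) else 0)
  else 1

/-!
The last coordinate of a feasible point decides everything. If it is `0`, the objective only sees
the items of `S`, whose total weight is `q · 1/(2εq) = 1/(2ε)`. If it is `1`, the capacity left for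
the other items is `1/(2ε) - 1`, and the missing unit is exactly what the last coordinate adds to
the objective. The indicator of `S` attains the bound because `n ≥ 1`.
-/

section BigM

theorem sum_mul_add_le_sum_of_sum_mul_add_le {ι R : Type*} [Fintype ι] [Ring R] [PartialOrder R]
    [IsOrderedRing R] {w x : ι → R} {M y : R} {S : Finset ι} (hw : ∀ i, 0 ≤ w i)
    (hx : ∀ i, x i ∈ Set.Icc 0 1) (hy : y = 0 ∨ y = 1)
    (hcap : ∑ i, w i * x i + M * y ≤ M + ∑ i ∈ S, w i - 1) :
    ∑ i ∈ S, w i * x i + y ≤ ∑ i ∈ S, w i := by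
  rcases hy with rfl | rfl
  · rw [add_zero]
    exact Finset.sum_le_sum fun i _ => mul_le_of_le_one_right (hw i) (hx i).2
  · have hres : ∑ i, w i * x i ≤ ∑ i ∈ S, w i - 1 := by
      rwa [mul_one, add_comm, add_sub_assoc, add_le_add_iff_left] at hcap
    have hsub : ∑ i ∈ S, w i * x i ≤ ∑ i, w i * x i :=
      Finset.sum_le_univ_sum_of_nonneg fun i => mul_nonneg (hw i) (hx i).1
    exact le_sub_iff_add_le.mp (hsub.trans hres)

/-- The feasible points of the 0/1 knapsack problem with weights `a` and capacity `b`. Its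
instances here have `Fin.snoc w M` as weights, the last item being the one of large weight `M`. -/
def zeroOneKnapsack {d : ℕ} (a : Fin d → ℝ) (b : ℝ) : Set (Fin d → ℝ) :=
  {x | (∀ i, x i = 0 ∨ x i = 1) ∧ dot a x ≤ b}

variable {n : ℕ}

theorem dot_snoc (c : Fin n → ℝ) (a : ℝ) (x : Fin (n + 1) → ℝ) :
    dot (Fin.snoc c a) x = ∑ i, c i * x i.castSucc + a * x (Fin.last n) := by
  simp [dot, Fin.sum_univ_castSucc]

theorem dot_snoc_indicator_one (S : Finset (Fin n)) (w : Fin n → ℝ) (x : Fin (n + 1) → ℝ) :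
    dot (Fin.snoc (Set.indicator S w) 1) x =
      ∑ i ∈ S, w i * x i.castSucc + x (Fin.last n) := by
  simp [dot_snoc, Set.indicator_apply]

variable {w : Fin n → ℝ} {M : ℝ}

theorem snoc_indicator_mem_zeroOneKnapsack (hM : 1 ≤ M) (S : Finset (Fin n)) :
    Fin.snoc (Set.indicator S 1) 0 ∈
      zeroOneKnapsack (Fin.snoc w M) (M + ∑ i ∈ S, w i - 1) := by
  constructor
  · refine Fin.lastCases (by simp) fun i => ?_
    by_cases hi : i ∈ S <;> simp [hi]
  · have hdot : dot (Fin.snoc w M) (Fin.snoc (Set.indicator S 1) 0) = ∑ i ∈ S, w i := by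
      simp [dot_snoc, Set.indicator_apply]
    linarith

theorem isGreatest_dot_image_zeroOneKnapsack (hw : ∀ i, 0 ≤ w i) (hM : 1 ≤ M)
    (S : Finset (Fin n)) :
    IsGreatest (dot (Fin.snoc (Set.indicator S w) 1) ''
      zeroOneKnapsack (Fin.snoc w M) (M + ∑ i ∈ S, w i - 1)) (∑ i ∈ S, w i) := by
  constructor
  · refine ⟨_, snoc_indicator_mem_zeroOneKnapsack hM S, ?_⟩
    rw [dot_snoc_indicator_one]
    simp +contextual
  · rintro _ ⟨x, ⟨hbin, hcap⟩, rfl⟩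
    have hx (i : Fin (n + 1)) : x i ∈ Set.Icc 0 1 := by
      rcases hbin i with h | h <;> simp [h]
    rw [dot_snoc] at hcap
    rw [dot_snoc_indicator_one]
    exact sum_mul_add_le_sum_of_sum_mul_add_le hw (fun i => hx i.castSucc)
      (hbin (Fin.last n)) hcap

end BigM

theorem knapVert_eq_zeroOneKnapsack (q : ℕ) (ε : ℝ) :
    knapVert q ε = zeroOneKnapsack (Fin.snoc (fun _ => 1 / (2 * ε * q)) ((q : ℝ) ^ 2))
      ((q : ℝ) ^ 2 + 1 / (2 * ε) - 1) := by
  simp only [knapVert, zeroOneKnapsack, dot_snoc, one_div_mul_eq_div]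

theorem cvec_eq_snoc_indicator (q : ℕ) (ε : ℝ) (S : Finset (Fin (q ^ 2))) :
    cvec q ε S = Fin.snoc (Set.indicator S fun _ => 1 / (2 * ε * q)) 1 := by
  funext j
  refine Fin.lastCases ?_ (fun i => ?_) j <;> simp [cvec, Set.indicator_apply]

theorem knapsack_objective_max_general (ε : ℝ) (hε : 0 < ε) (q : ℕ) (hq : 1 ≤ q)
    (S : Finset (Fin (q ^ 2))) (hS : S.card = q) :
    IsGreatest ((fun x => dot (cvec q ε S) x) '' knapVert q ε) (1 / (2 * ε)) := by
  have hsum : ∑ _i ∈ S, 1 / (2 * ε * q) = 1 / (2 * ε) := by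
    rw [Finset.sum_const, hS, nsmul_eq_mul]
    field_simp
  have hM : (1 : ℝ) ≤ (q : ℝ) ^ 2 := one_le_pow₀ (by exact_mod_cast hq)
  rw [knapVert_eq_zeroOneKnapsack, cvec_eq_snoc_indicator, ← hsum]
  exact isGreatest_dot_image_zeroOneKnapsack (fun _ => by positivity) hM S

/-- for `0 < ε ≤ 1/2`, `q ≥ 1`, `n = q²` and `S ⊆ [n]` with `|S| = q`, the
maximum of the objective `cvec q ε S` over the feasible 0/1 knapsack points is `1/(2ε)`. -/
theorem knapsack_objective_max (ε : ℝ) (hε0 : 0 < ε) (hε1 : ε ≤ 1 / 2)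
    (q : ℕ) (hq : 1 ≤ q) (S : Finset (Fin (q ^ 2))) (hS : S.card = q) :
    IsGreatest ((fun x => dot (cvec q ε S) x) '' knapVert q ε) (1 / (2 * ε)) :=
  knapsack_objective_max_general ε hε0 q hq S hS
end
end

section
/- Let 0 < ε < 1/11, let q ≥ 1 be an integer, set n = q², and let S ⊆ {1,…,n} with |S| = q. Define c ∈ ℝ^{n+1} by c_{n+1} = 1, c_i = 1/(2εq) for i ∈ S, and c_i = 0 for i ∉ S with i ≤ n. Then c·x^S = 1/(2ε) + 11/20, and consequently (1−ε)·(c·x^S) > max{c·x : x ∈ P(n+1,ε)} = 1/(2ε). -/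
noncomputable section

/-- The point `x^S ∈ ℝ^{n+1}` (with `n = q²`) given by `x^S_{n+1} = 4/5`,
`x^S_i = 1 − ε/2` for `i ∈ S`, and `x^S_i = 0` otherwise. -/
def xptS (q : ℕ) (ε : ℝ) (S : Finset (Fin (q ^ 2))) : Fin (q ^ 2 + 1) → ℝ :=
  fun j => if h : (j : ℕ) < q ^ 2 then
    (if (⟨j, h⟩ : Fin (q ^ 2)) ∈ S then 1 - ε / 2 else 0)
  else 4 / 5

/-!
A linear functional has the same maximum on `P(n+1, ε)` as on its feasible 0/1 points. If such a
point has `x_{n+1} = 0`, then it collects at most the total profit `q · 1/(2εq) = 1/(2ε)` of `S`,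
and this is attained by the indicator of `S`. If `x_{n+1} = 1`, then the remaining capacity is
`1/(2ε) − 1`; since the profit of each small item is either its weight or zero, the total profit is
at most `(1/(2ε) − 1) + 1`. On the other hand, shrinking each coordinate in `S` from `1` to
`1 − ε/2` costs only `1/4` in total, while `x^S_{n+1} = 4/5`, which leaves a surplus of `11/20`.
Scaling by `1 − ε` then costs `1/2 + 11ε/20`, which is less than `11/20` exactly when `ε < 1/11`.
-/

section GeneralLemmas

theorem isGreatest_image_convexHull {𝕜 E β : Type*} [Semiring 𝕜] [PartialOrder 𝕜]
    [AddCommMonoid E] [Module 𝕜 E] [AddCommMonoid β] [PartialOrder β] [IsOrderedAddMonoid β]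
    [Module 𝕜 β] [PosSMulMono 𝕜 β] (f : E →ₗ[𝕜] β) {s : Set E} {a : β}
    (h : IsGreatest (f '' s) a) : IsGreatest (f '' convexHull 𝕜 s) a := by
  rw [f.image_convexHull]
  exact ⟨subset_convexHull 𝕜 _ h.1, fun _ hb => convexHull_min h.2 (convex_Iic a) hb⟩

theorem sum_mul_add_mul_le_sum_of_knapsack {ι R : Type*} [Fintype ι] [CommRing R] [LinearOrder R]
    [IsStrictOrderedRing R] {S : Finset ι} {w x : ι → R} {W p b t : R} (hw : ∀ i, 0 ≤ w i)
    (hx0 : ∀ i, 0 ≤ x i) (hx1 : ∀ i ∈ S, x i ≤ 1) (ht : t = 0 ∨ t = 1)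
    (hcap : ∑ i, w i * x i + W * t ≤ b) (hb : b + p ≤ W + ∑ i ∈ S, w i) :
    ∑ i ∈ S, w i * x i + p * t ≤ ∑ i ∈ S, w i := by
  rcases ht with rfl | rfl
  · rw [mul_zero, add_zero]
    exact Finset.sum_le_sum fun i hi => mul_le_of_le_one_right (hw i) (hx1 i hi)
  · have hS : ∑ i ∈ S, w i * x i ≤ ∑ i, w i * x i :=
      Finset.sum_le_univ_sum_of_nonneg fun i => mul_nonneg (hw i) (hx0 i)
    linarith

theorem sum_const_div_mul_card {ι K : Type*} [Field K] [CharZero K] {S : Finset ι} {n : ℕ}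
    (hn : n ≠ 0) (hS : S.card = n) (a b : K) : ∑ _i ∈ S, a / (b * n) = a / b := by
  rw [Finset.sum_const, hS, nsmul_eq_mul, mul_comm, div_mul_eq_mul_div,
    mul_div_mul_right _ _ (Nat.cast_ne_zero.mpr hn)]

end GeneralLemmas

section Coordinates

variable (q : ℕ) (ε : ℝ) (S : Finset (Fin (q ^ 2)))

@[simp]
theorem cvec_castSucc (i : Fin (q ^ 2)) :
    cvec q ε S i.castSucc = if i ∈ S then 1 / (2 * ε * q) else 0 := by
  simp [cvec]

@[simp]
theorem cvec_last : cvec q ε S (Fin.last (q ^ 2)) = 1 := by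
  simp [cvec]

@[simp]
theorem xptS_castSucc (i : Fin (q ^ 2)) :
    xptS q ε S i.castSucc = if i ∈ S then 1 - ε / 2 else 0 := by
  simp [xptS]

@[simp]
theorem xptS_last : xptS q ε S (Fin.last (q ^ 2)) = 4 / 5 := by
  simp [xptS]

theorem dot_cvec (x : Fin (q ^ 2 + 1) → ℝ) :
    dot (cvec q ε S) x = ∑ i ∈ S, 1 / (2 * ε * q) * x i.castSucc + x (Fin.last (q ^ 2)) := by
  simp [dot, Fin.sum_univ_castSucc]

end Coordinates

section Knapsack

variable {q : ℕ} {ε : ℝ} {S : Finset (Fin (q ^ 2))}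

theorem dot_cvec_of_forall_mem_eq (hq : q ≠ 0) (hS : S.card = q) {x : Fin (q ^ 2 + 1) → ℝ} {a : ℝ}
    (hx : ∀ i ∈ S, x i.castSucc = a) :
    dot (cvec q ε S) x = a / (2 * ε) + x (Fin.last (q ^ 2)) := by
  rw [dot_cvec, ← sum_const_div_mul_card hq hS a]
  congr 1
  exact Finset.sum_congr rfl fun i hi => by rw [hx i hi, one_div_mul_eq_div]

theorem dot_cvec_xptS (hε : ε ≠ 0) (hq : q ≠ 0) (hS : S.card = q) :
    dot (cvec q ε S) (xptS q ε S) = 1 / (2 * ε) + 11 / 20 := by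
  rw [dot_cvec_of_forall_mem_eq hq hS (a := 1 - ε / 2) fun i hi => by simp [hi], xptS_last]
  field_simp
  ring

theorem snoc_indicator_mem_knapVert (hq : q ≠ 0) (hS : S.card = q) :
    (Fin.snoc ((S : Set (Fin (q ^ 2))).indicator 1) 0 : Fin (q ^ 2 + 1) → ℝ) ∈ knapVert q ε := by
  refine ⟨fun i => ?_, ?_⟩
  · induction i using Fin.lastCases with
    | last => simp
    | cast i => by_cases hi : i ∈ S <;> simp [hi]
  · have hweight : ∑ i, (S : Set (Fin (q ^ 2))).indicator (1 : Fin (q ^ 2) → ℝ) i / (2 * ε * q)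
        = 1 / (2 * ε) := by
      rw [← sum_const_div_mul_card hq hS]
      simp [Set.indicator_apply, ite_div]
    have hq1 : (1 : ℝ) ≤ q ^ 2 := one_le_pow₀ (Nat.one_le_cast.mpr (Nat.one_le_iff_ne_zero.mpr hq))
    simp only [Fin.snoc_castSucc, Fin.snoc_last, hweight, mul_zero, add_zero]
    linarith

theorem dot_cvec_le_of_mem_knapVert (hε : 0 < ε) (hq : q ≠ 0) (hS : S.card = q)
    {x : Fin (q ^ 2 + 1) → ℝ} (hx : x ∈ knapVert q ε) :
    dot (cvec q ε S) x ≤ 1 / (2 * ε) := by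
  obtain ⟨hbin, hcap⟩ := hx
  have hIcc : ∀ i, x i ∈ Set.Icc 0 1 := fun i => by rcases hbin i with h | h <;> simp [h]
  have hprofit : ∑ _i ∈ S, 1 / (2 * ε * q) = 1 / (2 * ε) := sum_const_div_mul_card hq hS 1 _
  rw [dot_cvec, ← one_mul (x (Fin.last _)), ← hprofit]
  refine sum_mul_add_mul_le_sum_of_knapsack (W := (q : ℝ) ^ 2) (fun _ => by positivity)
    (fun i => (hIcc _).1) (fun i _ => (hIcc _).2) (hbin _) ?_ (b := q ^ 2 + 1 / (2 * ε) - 1) ?_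
  · simpa only [one_div_mul_eq_div] using hcap
  · rw [hprofit]
    linarith

theorem isGreatest_dot_cvec_knapVert (hε : 0 < ε) (hq : q ≠ 0) (hS : S.card = q) :
    IsGreatest (dot (cvec q ε S) '' knapVert q ε) (1 / (2 * ε)) := by
  refine ⟨⟨_, snoc_indicator_mem_knapVert hq hS, ?_⟩, ?_⟩
  · rw [dot_cvec_of_forall_mem_eq hq hS (a := 1) fun i hi => by simp [hi], Fin.snoc_last, add_zero]
  · rintro _ ⟨x, hx, rfl⟩
    exact dot_cvec_le_of_mem_knapVert hε hq hS hx

theorem isGreatest_dot_cvec_knapP (hε : 0 < ε) (hq : q ≠ 0) (hS : S.card = q) :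
    IsGreatest (dot (cvec q ε S) '' knapP q ε) (1 / (2 * ε)) :=
  isGreatest_image_convexHull (dotProductBilin ℝ ℝ (cvec q ε S))
    (isGreatest_dot_cvec_knapVert hε hq hS)

end Knapsack

/-- for `0 < ε < 1/11`, `q ≥ 1`, `n = q²` and `S ⊆ [n]` with `|S| = q`, one has
`c·x^S = 1/(2ε) + 11/20`, the maximum of `c` over `P(n+1, ε)` equals `1/(2ε)`, and hence
`(1−ε)·(c·x^S) > max {c·x : x ∈ P(n+1, ε)}`, where `c = cvec q ε S`. -/
theorem knapsack_point_beats_polytope (ε : ℝ) (hε0 : 0 < ε) (hε1 : ε < 1 / 11)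
    (q : ℕ) (hq : 1 ≤ q) (S : Finset (Fin (q ^ 2))) (hS : S.card = q) :
    dot (cvec q ε S) (xptS q ε S) = 1 / (2 * ε) + 11 / 20 ∧
    IsGreatest ((fun x => dot (cvec q ε S) x) '' knapP q ε) (1 / (2 * ε)) ∧
    1 / (2 * ε) < (1 - ε) * dot (cvec q ε S) (xptS q ε S) := by
  have hq0 : q ≠ 0 := Nat.one_le_iff_ne_zero.mp hq
  have hval := dot_cvec_xptS hε0.ne' hq0 hS
  refine ⟨hval, isGreatest_dot_cvec_knapP hε0 hq0 hS, ?_⟩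
  calc 1 / (2 * ε) < 1 / (2 * ε) + 11 / 20 * (1 / 11 - ε) := by linarith
    _ = (1 - ε) * (1 / (2 * ε) + 11 / 20) := by
      field_simp
      ring
    _ = (1 - ε) * dot (cvec q ε S) (xptS q ε S) := by rw [hval]
end
end

section
/- Let ε ∈ (0, 2/27), let q ≥ 12 be an integer with q² > 1/ε, and set n = q². Let S, S' ⊆ {1,…,n} be distinct sets with |S| = |S'| = q and |S ∩ S'| ≤ ⌊q/2⌋ − 4. Then the midpoint (x^S + x^{S'})/2 belongs to the knapsack polytope P(n+1,ε). -/
noncomputable section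

/-!
Writing points of `ℝ^{n+1}` as `(y, z)` with `y ∈ ℝ^n`, the midpoint of `x^S` and `x^{S'}` equals
`4/5 • (y, 1) + 1/5 • (𝟙_{S ∪ S'}, 0)` for a suitable `y ∈ [0,1]^n`. The point `(𝟙_{S ∪ S'}, 0)` is
feasible since `1/ε ≤ q²`. The points `(x, 1)` with `x ∈ {0,1}^n` are feasible exactly when
`∑ xᵢ ≤ q(1 - 2ε)`, and for an integer `K` the hull of the 0/1 points with `∑ xᵢ ≤ K` is the whole
truncated cube `{y ∈ [0,1]^n | ∑ yᵢ ≤ K}`, so `(y, 1)` is in the polytope as soon as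
`∑ yᵢ ≤ ⌊q(1 - 2ε)⌋`. Here `∑ yᵢ = q(3/4 - 5ε/8) + |S ∩ S'|/4`, which is at most `q(1 - 2ε) - 1`
if and only if `|S ∩ S'| + 4 ≤ q(1 - 11ε/2)`.
-/

section TruncatedCube

variable {ι : Type*} [Fintype ι] {s : ℝ} {x v : ι → ℝ}

variable (ι s) in
/-- The unit cube cut by the half-space `∑ i, x i ≤ s`, that is, the linear relaxation of a
cardinality constraint on 0/1 vectors. -/
def truncatedCube : Set (ι → ℝ) := {x | x ∈ Set.Icc 0 1 ∧ ∑ i, x i ≤ s}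

lemma convex_truncatedCube : Convex ℝ (truncatedCube ι s) :=
  (convex_Icc 0 1).inter (convex_halfSpace_le (IsLinearMap.mk
    (fun x y ↦ by simp [Finset.sum_add_distrib]) fun c x ↦ by simp [Finset.mul_sum]) s)

lemma isCompact_truncatedCube : IsCompact (truncatedCube ι s) :=
  isCompact_Icc.inter_right <|
    isClosed_le (continuous_finsetSum _ fun i _ ↦ continuous_apply i) continuous_const

lemma add_mem_truncatedCube (hv : ∀ i, |v i| ≤ min (x i) (1 - x i))
    (hsum : |∑ i, v i| ≤ s - ∑ i, x i) : x + v ∈ truncatedCube ι s := by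
  simp only [le_min_iff, abs_le] at hv hsum
  refine ⟨⟨fun i ↦ ?_, fun i ↦ ?_⟩, ?_⟩
  · simpa using (by linarith [(hv i).1.1] : 0 ≤ x i + v i)
  · simpa using (by linarith [(hv i).2.2] : x i + v i ≤ 1)
  · simpa [Finset.sum_add_distrib] using (by linarith : ∑ i, x i + ∑ i, v i ≤ s)

lemma eq_zero_of_mem_extremePoints_truncatedCube (hx : x ∈ (truncatedCube ι s).extremePoints ℝ)
    (hv : ∀ i, |v i| ≤ min (x i) (1 - x i)) (hsum : |∑ i, v i| ≤ s - ∑ i, x i) : v = 0 := by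
  have hadd : x + v ∈ truncatedCube ι s := add_mem_truncatedCube hv hsum
  have hsub : x - v ∈ truncatedCube ι s := by
    rw [sub_eq_add_neg]
    exact add_mem_truncatedCube (by simpa using hv) (by simpa using hsum)
  simpa using hx.2 hsub hadd (mem_openSegment_sub_add x v)

/-- Otherwise one could shift a small amount of weight between the two coordinates. -/
lemma eq_of_fractional_of_mem_extremePoints_truncatedCube
    (hx : x ∈ (truncatedCube ι s).extremePoints ℝ) {i j : ι}
    (hi : x i ∈ Set.Ioo 0 1) (hj : x j ∈ Set.Ioo 0 1) : i = j := by
  classical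
  by_contra hij
  set δ := min (min (x i) (1 - x i)) (min (x j) (1 - x j))
  have hδ : 0 < δ := by simp [δ, hi.1, hi.2, hj.1, hj.2]
  have hshift : (Pi.single i δ - Pi.single j δ : ι → ℝ) = 0 := by
    refine eq_zero_of_mem_extremePoints_truncatedCube hx (fun k ↦ ?_) ?_
    · obtain rfl | hki := eq_or_ne k i
      · simp [hij, abs_of_pos hδ, δ]
      obtain rfl | hkj := eq_or_ne k j
      · simp [hki, abs_of_pos hδ, δ]
      · simpa [hki, hkj] using ⟨hx.1.1.1 k, hx.1.1.2 k⟩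
    · simpa using hx.1.2
  exact hδ.ne' (by simpa [hij] using congrFun hshift i)

lemma eq_zero_or_one_of_mem_extremePoints_truncatedCube {K : ℕ}
    (hx : x ∈ (truncatedCube ι (K : ℝ)).extremePoints ℝ) (i : ι) : x i = 0 ∨ x i = 1 := by
  classical
  by_contra! hi
  have mem_Ioo {j : ι} (hj : x j ≠ 0 ∧ x j ≠ 1) : x j ∈ Set.Ioo 0 1 :=
    ⟨(hx.1.1.1 j).lt_of_ne' hj.1, (hx.1.1.2 j).lt_of_ne hj.2⟩
  have hxi := mem_Ioo hi
  have others_integral : ∀ j ∈ Finset.univ.erase i, x j = 0 ∨ x j = 1 := by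
    intro j hj
    by_contra! hj'
    exact Finset.ne_of_mem_erase hj
      (eq_of_fractional_of_mem_extremePoints_truncatedCube hx (mem_Ioo hj') hxi)
  obtain ⟨m, hm⟩ : ∑ j ∈ Finset.univ.erase i, x j ∈ (Nat.castRingHom ℝ).rangeS :=
    sum_mem fun j hj ↦ (others_integral j hj).elim (fun h ↦ h ▸ zero_mem _) fun h ↦ h ▸ one_mem _
  rw [eq_natCast] at hm
  have hsum : ∑ j, x j = x i + m := by rw [hm, Finset.add_sum_erase _ _ (Finset.mem_univ i)]
  -- The bound `K` being an integer as well, there is slack at least `1 - x i` to raise `x i`.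
  have hmK : (m : ℝ) + 1 ≤ K := by
    have : (m : ℝ) < K := by linarith [hx.1.2, hxi.1]
    exact_mod_cast this
  set δ := min (x i) (1 - x i)
  have hδ : 0 < δ := by simp [δ, hxi.1, hxi.2]
  have hbump : (Pi.single i δ : ι → ℝ) = 0 := by
    refine eq_zero_of_mem_extremePoints_truncatedCube hx (fun k ↦ ?_) ?_
    · obtain rfl | hki := eq_or_ne k i
      · simp [abs_of_pos hδ, δ]
      · simpa [hki] using ⟨hx.1.1.1 k, hx.1.1.2 k⟩
    · have : δ ≤ 1 - x i := min_le_right _ _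
      simp only [Finset.sum_pi_single', Finset.mem_univ, if_true, abs_of_pos hδ]
      linarith
  exact hδ.ne' (by simpa using congrFun hbump i)

theorem truncatedCube_subset_convexHull_zero_one (K : ℕ) :
    truncatedCube ι (K : ℝ) ⊆ convexHull ℝ {x | (∀ i, x i = 0 ∨ x i = 1) ∧ ∑ i, x i ≤ K} := by
  set V : Set (ι → ℝ) := {x | (∀ i, x i = 0 ∨ x i = 1) ∧ ∑ i, x i ≤ K}
  have hVfin : V.Finite :=
    (Set.Finite.pi' fun _ ↦ Set.toFinite {0, 1}).subset fun x hx i ↦ hx.1 i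
  have hext : (truncatedCube ι (K : ℝ)).extremePoints ℝ ⊆ V := fun x hx ↦
    ⟨eq_zero_or_one_of_mem_extremePoints_truncatedCube hx, hx.1.2⟩
  calc truncatedCube ι (K : ℝ)
      = closure (convexHull ℝ ((truncatedCube ι (K : ℝ)).extremePoints ℝ)) :=
        (closure_convexHull_extremePoints isCompact_truncatedCube convex_truncatedCube).symm
    _ ⊆ convexHull ℝ V := closure_minimal (convexHull_mono hext) (hVfin.isClosed_convexHull ℝ)

end TruncatedCube

lemma convex_setOf_snoc_mem {n : ℕ} {C : Set (Fin (n + 1) → ℝ)} (hC : Convex ℝ C) (z : ℝ) :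
    Convex ℝ {x : Fin n → ℝ | (Fin.snoc x z : Fin (n + 1) → ℝ) ∈ C} := by
  intro x hx y hy a b ha hb hab
  have hcomb : (Fin.snoc (a • x + b • y) z : Fin (n + 1) → ℝ) =
      a • (Fin.snoc x z : Fin (n + 1) → ℝ) + b • (Fin.snoc y z : Fin (n + 1) → ℝ) := by
    ext i
    cases i using Fin.lastCases <;> simp [← add_mul, hab]
  rw [Set.mem_ofPred_eq, hcomb]
  exact hC hx hy ha hb hab

section Knapsack

variable {q : ℕ} {ε : ℝ}

lemma snoc_mem_knapVert_iff {x : Fin (q ^ 2) → ℝ} {z : ℝ} :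
    (Fin.snoc x z : Fin (q ^ 2 + 1) → ℝ) ∈ knapVert q ε ↔
      ((∀ i, x i = 0 ∨ x i = 1) ∧ (z = 0 ∨ z = 1)) ∧
        (∑ i, x i) / (2 * ε * q) + (q : ℝ) ^ 2 * z ≤ (q : ℝ) ^ 2 + 1 / (2 * ε) - 1 := by
  simp [knapVert, Fin.forall_fin_succ', Finset.sum_div]

lemma snoc_one_mem_knapVert (hε : 0 < ε) (hq : 0 < q) {x : Fin (q ^ 2) → ℝ}
    (hx : ∀ i, x i = 0 ∨ x i = 1) (hsum : ∑ i, x i ≤ q * (1 - 2 * ε)) :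
    (Fin.snoc x 1 : Fin (q ^ 2 + 1) → ℝ) ∈ knapVert q ε := by
  have hload : (∑ i, x i) / (2 * ε * q) ≤ 1 / (2 * ε) - 1 :=
    calc (∑ i, x i) / (2 * ε * q) ≤ q * (1 - 2 * ε) / (2 * ε * q) := by gcongr
      _ = 1 / (2 * ε) - 1 := by field_simp
  exact snoc_mem_knapVert_iff.2 ⟨⟨hx, .inr rfl⟩, by linarith⟩

lemma snoc_zero_mem_knapVert (hε : 0 < ε) (hε' : ε ≤ 1 / 2) (hqε : 1 / ε ≤ (q : ℝ) ^ 2)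
    {x : Fin (q ^ 2) → ℝ} (hx : ∀ i, x i = 0 ∨ x i = 1) (hsum : ∑ i, x i ≤ 2 * q) :
    (Fin.snoc x 0 : Fin (q ^ 2 + 1) → ℝ) ∈ knapVert q ε := by
  have hload : (∑ i, x i) / (2 * ε * q) ≤ 1 / ε :=
    div_le_of_le_mul₀ (by positivity) (by positivity) (by field_simp; linarith)
  have hhalf : 1 ≤ 1 / (2 * ε) := by rw [le_div_iff₀ (by positivity)]; linarith
  exact snoc_mem_knapVert_iff.2 ⟨⟨hx, .inl rfl⟩, by linarith⟩

lemma snoc_one_mem_knapP (hε : 0 < ε) (hε' : ε ≤ 1 / 2) (hq : 0 < q) {x : Fin (q ^ 2) → ℝ}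
    (hx : x ∈ truncatedCube (Fin (q ^ 2)) (⌊q * (1 - 2 * ε)⌋₊ : ℝ)) :
    (Fin.snoc x 1 : Fin (q ^ 2 + 1) → ℝ) ∈ knapP q ε := by
  have hfloor : (⌊q * (1 - 2 * ε)⌋₊ : ℝ) ≤ q * (1 - 2 * ε) :=
    Nat.floor_le (mul_nonneg q.cast_nonneg (by linarith))
  have hconv := convex_setOf_snoc_mem (convex_convexHull ℝ (knapVert q ε)) 1
  refine convexHull_min (fun y hy ↦ ?_) hconv (truncatedCube_subset_convexHull_zero_one _ hx)
  exact subset_convexHull ℝ _ (snoc_one_mem_knapVert hε hq hy.1 (hy.2.trans hfloor))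

lemma xptS_eq_snoc (S : Finset (Fin (q ^ 2))) :
    xptS q ε S = Fin.snoc (fun i ↦ if i ∈ S then 1 - ε / 2 else 0) (4 / 5) := by
  ext i
  cases i using Fin.lastCases <;> simp [xptS]

end Knapsack

section TopPart

variable {ι : Type*} [DecidableEq ι] {ε : ℝ} {S S' : Finset ι}

variable (ε S S') in
/-- The point `y` with `(x^S + x^{S'}) / 2 = 4/5 • (y, 1) + 1/5 • (𝟙_{S ∪ S'}, 0)`: it is
`1 - 5ε/8` on `S ∩ S'`, `3/8 - 5ε/16` on the symmetric difference, and `0` elsewhere. -/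
def topPart : ι → ℝ := fun i ↦
  5 / 8 * ((if i ∈ S then 1 - ε / 2 else 0) + (if i ∈ S' then 1 - ε / 2 else 0)) -
    1 / 4 * (if i ∈ S ∪ S' then 1 else 0)

lemma topPart_mem_Icc (hε : 0 ≤ ε) (hε' : ε ≤ 6 / 5) : topPart ε S S' ∈ Set.Icc 0 1 := by
  constructor <;> intro i <;> by_cases hS : i ∈ S <;> by_cases hS' : i ∈ S' <;>
    simp [topPart, hS, hS'] <;> linarith

lemma sum_topPart [Fintype ι] : ∑ i, topPart ε S S' i =
    5 / 8 * (1 - ε / 2) * (S.card + S'.card) - 1 / 4 * (S ∪ S').card := by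
  simp only [topPart, Finset.sum_sub_distrib, ← Finset.mul_sum, Finset.sum_add_distrib,
    Finset.sum_ite_mem, Finset.univ_inter, Finset.sum_const, nsmul_eq_mul]
  ring

end TopPart

lemma midpoint_xptS_eq {q : ℕ} {ε : ℝ} (S S' : Finset (Fin (q ^ 2))) :
    (1 / 2 : ℝ) • xptS q ε S + (1 / 2 : ℝ) • xptS q ε S' =
      (4 / 5 : ℝ) • (Fin.snoc (topPart ε S S') 1 : Fin (q ^ 2 + 1) → ℝ) +
        (1 / 5 : ℝ) • (Fin.snoc (fun i ↦ if i ∈ S ∪ S' then 1 else 0) 0 : Fin (q ^ 2 + 1) → ℝ) := by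
  rw [xptS_eq_snoc, xptS_eq_snoc]
  ext i
  cases i using Fin.lastCases with
  | last => norm_num
  | cast i =>
    simp only [topPart, Pi.add_apply, Pi.smul_apply, smul_eq_mul, Fin.snoc_castSucc]
    ring

theorem midpoint_in_knapsack_polytope_general {ε : ℝ} (hε : 0 < ε)
    {q : ℕ} (hqε : 1 / ε ≤ (q : ℝ) ^ 2) {S S' : Finset (Fin (q ^ 2))}
    (hS : S.card = q) (hS' : S'.card = q)
    (hint : ((S ∩ S').card : ℝ) + 4 ≤ q * (1 - 11 / 2 * ε)) :
    (1 / 2 : ℝ) • xptS q ε S + (1 / 2 : ℝ) • xptS q ε S' ∈ knapP q ε := by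
  have hprod : 0 < q * (1 - 11 / 2 * ε) :=
    (by positivity : (0 : ℝ) < (S ∩ S').card + 4).trans_le hint
  have hq : 0 < q := Nat.pos_of_ne_zero fun h ↦ by simp [h] at hprod
  have hε' : ε < 2 / 11 := by linarith [pos_of_mul_pos_right hprod q.cast_nonneg]
  have hunion : ((S ∪ S').card : ℝ) + (S ∩ S').card = 2 * q := by
    exact_mod_cast (Finset.card_union_add_card_inter S S').trans (by omega)
  have htop : topPart ε S S' ∈ truncatedCube _ (⌊q * (1 - 2 * ε)⌋₊ : ℝ) := by
    refine ⟨topPart_mem_Icc hε.le (by linarith), ?_⟩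
    have := Nat.lt_floor_add_one (q * (1 - 2 * ε))
    rw [sum_topPart, hS, hS']
    linarith
  have hbottom : ∑ i, (if i ∈ S ∪ S' then 1 else 0 : ℝ) ≤ 2 * q := by
    simp only [Finset.sum_boole, Finset.filter_univ_mem]
    linarith [(S ∩ S').card.cast_nonneg (α := ℝ)]
  rw [midpoint_xptS_eq]
  exact convex_convexHull ℝ _ (snoc_one_mem_knapP hε (by linarith) hq htop)
    (subset_convexHull ℝ _ (snoc_zero_mem_knapVert hε (by linarith) hqε
      (fun _ ↦ (ite_eq_or_eq ..).symm) hbottom))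
    (by norm_num) (by norm_num) (by norm_num)

/-- for `ε ∈ (0, 2/27)`, an integer `q ≥ 12` with `q² > 1/ε`, `n = q²`, and
distinct `S, S' ⊆ [n]` with `|S| = |S'| = q` and `|S ∩ S'| ≤ ⌊q/2⌋ − 4`, the midpoint
`(x^S + x^{S'})/2` belongs to the knapsack polytope `P(n+1, ε)`. -/
theorem midpoint_in_knapsack_polytope (ε : ℝ) (hε0 : 0 < ε) (hε1 : ε < 2 / 27)
    (q : ℕ) (hq : 12 ≤ q) (hqε : 1 / ε < ((q : ℝ) ^ 2))
    (S S' : Finset (Fin (q ^ 2))) (hne : S ≠ S')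
    (hS : S.card = q) (hS' : S'.card = q)
    (hint : (S ∩ S').card ≤ q / 2 - 4) :
    (1 / 2 : ℝ) • xptS q ε S + (1 / 2 : ℝ) • xptS q ε S' ∈ knapP q ε := by
  refine midpoint_in_knapsack_polytope_general hε0 hqε.le hS hS' ?_
  have hint' : 2 * ((S ∩ S').card : ℝ) + 8 ≤ q := by exact_mod_cast (by omega)
  linarith [mul_le_mul_of_nonneg_right hε1.le (q.cast_nonneg (α := ℝ))]
end
end
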